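/- arXiv:1803.11038 — 4 statements merged into one kernel-verified Lean document; each statement's English description precedes it below -/
import Mathlib

section
/- Let D be a nonprincipal ultrafilter on ℕ and let Z' = ⟨S', P', C', I'⟩ be the ultrapower of Z with respect to D. Then the term algebra of Z and the term algebra of Z', regarded as first-order structures in the language with binary operation symbols + and ;, unary operation symbols − and ⁻, and constant symbol 1' (interpreted respectively by union, the composition operation ;, complementation in S resp. S', the converse operation ⁻, and I resp. I'), are not elementarily equivalent. -/
open FirstOrder FirstOrder.Language

/-- Relation symbols of the language of atom structures: a unary `I`,
a binary `C` and a ternary `P`. -/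
inductive AtomRel : ℕ → Type
  | I : AtomRel 1
  | C : AtomRel 2
  | P : AtomRel 3

/-- The first-order language with one ternary relation symbol `P`, one binary
relation symbol `C` and one unary relation symbol `I`. -/
def atomLang : FirstOrder.Language :=
  ⟨fun _ => Empty, AtomRel⟩

/-- Function symbols of the language of the term algebras: a constant `1'`,
unary symbols `−` (complement) and `⁻` (converse), binary symbols `+` and `;`. -/
inductive AlgFun : ℕ → Type
  | one : AlgFun 0
  | compl : AlgFun 1
  | conv : AlgFun 1
  | add : AlgFun 2
  | comp : AlgFun 2

/-- The first-order language with binary operations `+` and `;`, unary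
operations `−` and `⁻`, and a constant `1'`. -/
def algLang : FirstOrder.Language :=
  ⟨AlgFun, fun _ => Empty⟩

section Generic

variable {M : Type} [atomLang.Structure M]

/-- The interpretation of the unary relation symbol `I`. -/
def mI (a : M) : Prop := Structure.RelMap (L := atomLang) (AtomRel.I : atomLang.Relations 1) ![a]

/-- The interpretation of the binary relation symbol `C`. -/
def mC (a b : M) : Prop := Structure.RelMap (L := atomLang) (AtomRel.C : atomLang.Relations 2) ![a, b]

/-- The interpretation of the ternary relation symbol `P`. -/
def mP (a b c : M) : Prop := Structure.RelMap (L := atomLang) (AtomRel.P : atomLang.Relations 3) ![a, b, c]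

/-- `X ; Y = {u : ∃ x ∈ X, y ∈ Y, P(x,y,u)}`. -/
def sComp (X Y : Set M) : Set M := {u | ∃ x ∈ X, ∃ y ∈ Y, mP x y u}

/-- `X⁻ = {u : ∃ x ∈ X, C(x,u)}`. -/
def sConv (X : Set M) : Set M := {u | ∃ x ∈ X, mC x u}

/-- The set of elements satisfying `I`. -/
def idSet (M : Type) [atomLang.Structure M] : Set M := {a | mI a}

end Generic

/-- Membership in the term algebra: the smallest collection of subsets of `M`
containing all singletons and the set `I`, closed under binary union,
complementation, `;` and `⁻`. -/
inductive InTA (M : Type) [atomLang.Structure M] : Set M → Prop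
  | sing (a : M) : InTA M {a}
  | idset : InTA M (idSet M)
  | union {X Y : Set M} : InTA M X → InTA M Y → InTA M (X ∪ Y)
  | compl {X : Set M} : InTA M X → InTA M Xᶜ
  | comp {X Y : Set M} : InTA M X → InTA M Y → InTA M (sComp X Y)
  | conv {X : Set M} : InTA M X → InTA M (sConv X)

/-- The term algebra of an atom structure, as a type. -/
def TermAlg (M : Type) [atomLang.Structure M] : Type := {X : Set M // InTA M X}

/-- The term algebra as a structure in the language `algLang`:
`+` is union, `−` is complement, `;` and `⁻` are the operations defined from
`P` and `C`, and `1'` is the set `I`. -/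
instance termAlgStructure (M : Type) [atomLang.Structure M] :
    algLang.Structure (TermAlg M) where
  funMap := fun {_} f v =>
    match f with
    | .one => ⟨idSet M, InTA.idset⟩
    | .compl => ⟨(v 0).1ᶜ, InTA.compl (v 0).2⟩
    | .conv => ⟨sConv (v 0).1, InTA.conv (v 0).2⟩
    | .add => ⟨(v 0).1 ∪ (v 1).1, InTA.union (v 0).2 (v 1).2⟩
    | .comp => ⟨sComp (v 0).1 (v 1).1, InTA.comp (v 0).2 (v 1).2⟩
  RelMap := fun {_} r _ => r.elim

/-- `a` goes from `x` to `y` when `P(x,a,a)` and `P(a,y,a)`. -/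
def goes {M : Type} [atomLang.Structure M] (a x y : M) : Prop := mP x a a ∧ mP a y a

/-- `X` splits the pair `(x,y)` when some `a ∈ X` and some `b ∉ X` both go
from `x` to `y`. -/
def SplitsG {M : Type} [atomLang.Structure M] (X : Set M) (x y : M) : Prop :=
  ∃ a ∈ X, ∃ b ∉ X, goes a x y ∧ goes b x y

/-- The pair `(x,y)` is splitable when `x ≠ y` and at least two distinct
elements go from `x` to `y`. -/
def SplitableG {M : Type} [atomLang.Structure M] (x y : M) : Prop :=
  x ≠ y ∧ ∃ a b : M, a ≠ b ∧ goes a x y ∧ goes b x y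

/-- Converse of a binary relation, as a set of pairs. -/
def relConv {U : Type} (R : Set (U × U)) : Set (U × U) := {p | (p.2, p.1) ∈ R}

/-- Composition of binary relations, as sets of pairs. -/
def relComp {U : Type} (R T : Set (U × U)) : Set (U × U) :=
  {p | ∃ w, (p.1, w) ∈ R ∧ (w, p.2) ∈ T}

/-- An atom structure is completely representable. -/
def CompRep (M : Type) [atomLang.Structure M] : Prop :=
  ∃ (U : Type) (rep : M → Set (U × U)),
    (∀ a : M, (rep a).Nonempty) ∧
    (∀ a b : M, a ≠ b → Disjoint (rep a) (rep b)) ∧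
    (⋃ a : M, rep a) = Set.univ ∧
    (∀ a : M, (mI a ↔ rep a ⊆ Set.diagonal U) ∧
      ((rep a ⊆ Set.diagonal U) ↔ (rep a ∩ Set.diagonal U).Nonempty)) ∧
    (∀ a b : M, (mC a b ↔ rep b = relConv (rep a)) ∧
      ((rep b = relConv (rep a)) ↔ (rep b ∩ relConv (rep a)).Nonempty)) ∧
    (∀ a b c : M, (mP a b c ↔ rep c ⊆ relComp (rep a) (rep b)) ∧
      ((rep c ⊆ relComp (rep a) (rep b)) ↔ (rep c ∩ relComp (rep a) (rep b)).Nonempty))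
/-- The atoms of the atom structure `Z`: identity atoms `id n i` (`i ≤ n`),
split atoms `r n k` and their converses `rc n k` (`1 ≤ k ≤ n`), and
atoms `w n i m j` (`i ≤ n`, `j ≤ m`).  Distinct constructor applications give
pairwise distinct elements. -/
inductive Atom : Type
  | id : (n i : ℕ) → i ≤ n → Atom
  | r : (n k : ℕ) → 1 ≤ k → k ≤ n → Atom
  | rc : (n k : ℕ) → 1 ≤ k → k ≤ n → Atom
  | w : (n i m j : ℕ) → i ≤ n → j ≤ m → Atom

/-- The domain function of `Z`. -/
def Atom.dom : Atom → Atom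
  | .id n i h => .id n i h
  | .r n _ _ _ => .id n 0 (Nat.zero_le n)
  | .rc n k _ h2 => .id n k h2
  | .w n i _ _ hi _ => .id n i hi

/-- The range function of `Z`. -/
def Atom.rg : Atom → Atom
  | .id n i h => .id n i h
  | .r n k _ h2 => .id n k h2
  | .rc n _ _ _ => .id n 0 (Nat.zero_le n)
  | .w _ _ m j _ hj => .id m j hj

/-- Membership in the set `I` of identity atoms of `Z`. -/
def Atom.isId : Atom → Prop
  | .id _ _ _ => True
  | _ => False

/-- The converse function on atoms of `Z`. -/
def Atom.cnv : Atom → Atom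
  | .id n i h => .id n i h
  | .r n k h1 h2 => .rc n k h1 h2
  | .rc n k h1 h2 => .r n k h1 h2
  | .w n i m j hi hj => .w m j n i hj hi

/-- The binary relation `C` of `Z`: it consists of the pairs `(x,x)` for
`x ∈ I`, `(r n k, rc n k)`, `(rc n k, r n k)` and `(w n i m j, w m j n i)`,
i.e. exactly the pairs `(a, cnv a)`. -/
def Crel (a b : Atom) : Prop := b = Atom.cnv a

/-- The ternary relation `P` of `Z`: the triples `(dom a, a, a)` and
`(a, rg a, a)` for `a ∈ S`, the triples `(a, b, dom a)` for `(a,b) ∈ C`, and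
the triples `(a,b,c)` of non-identity atoms with `dom a = dom c`,
`rg a = dom b`, `rg b = rg c`. -/
def Prel (a b c : Atom) : Prop :=
  (a = b.dom ∧ c = b) ∨
  (b = a.rg ∧ c = a) ∨
  (Crel a b ∧ c = a.dom) ∨
  (¬ a.isId ∧ ¬ b.isId ∧ ¬ c.isId ∧ a.dom = c.dom ∧ a.rg = b.dom ∧ b.rg = c.rg)

/-- `Z` as a structure for the language `atomLang`. -/
instance atomStructureZ : atomLang.Structure Atom where
  funMap := fun {_} f _ => f.elim
  RelMap := fun {_} r v =>
    match r with
    | AtomRel.I => (v 0).isId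
    | AtomRel.C => Crel (v 0) (v 1)
    | AtomRel.P => Prel (v 0) (v 1) (v 2)

/-- `X ⊆ S` splits the pair `(x,y)` if there are `a ∈ X` and `b ∉ X` with
`dom a = dom b = x` and `rg a = rg b = y`. -/
def Splits (X : Set Atom) (x y : Atom) : Prop :=
  ∃ a ∈ X, ∃ b ∉ X, a.dom = x ∧ a.rg = y ∧ b.dom = x ∧ b.rg = y

/-- The pair `(x,y)` is splitable if `x ≠ y` and there are two distinct
elements `a ≠ b` of `S` with `dom a = dom b = x` and `rg a = rg b = y`. -/
def Splitable (x y : Atom) : Prop :=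
  x ≠ y ∧ ∃ a b : Atom, a ≠ b ∧ a.dom = x ∧ a.rg = y ∧ b.dom = x ∧ b.rg = y

/-- The ultrapower `Z'` of the atom structure `Z` with respect to an
ultrafilter `D` on `J`. -/
def UPow (J : Type) (D : Ultrafilter J) : Type :=
  (D : Filter J).Product (fun _ : J => Atom)

/-- The ultraproduct structure on the ultrapower of `Z`. -/
instance uPowStructure (J : Type) (D : Ultrafilter J) : atomLang.Structure (UPow J D) :=
  inferInstanceAs (atomLang.Structure ((D : Filter J).Product fun _ : J => Atom))

def tComp {n : ℕ} (s t : algLang.Term (Empty ⊕ Fin n)) : algLang.Term (Empty ⊕ Fin n) :=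
  Functions.apply₂ (L := algLang) (AlgFun.comp : algLang.Functions 2) s t
def tAdd {n : ℕ} (s t : algLang.Term (Empty ⊕ Fin n)) : algLang.Term (Empty ⊕ Fin n) :=
  Functions.apply₂ (L := algLang) (AlgFun.add : algLang.Functions 2) s t
def tCompl {n : ℕ} (s : algLang.Term (Empty ⊕ Fin n)) : algLang.Term (Empty ⊕ Fin n) :=
  Functions.apply₁ (L := algLang) (AlgFun.compl : algLang.Functions 1) s
def tOne {n : ℕ} : algLang.Term (Empty ⊕ Fin n) :=
  Constants.term (L := algLang) (AlgFun.one : algLang.Functions 0)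
def tV {n : ℕ} (i : Fin n) : algLang.Term (Empty ⊕ Fin n) := Term.var (Sum.inr i)
def fLe {n : ℕ} (s t : algLang.Term (Empty ⊕ Fin n)) : algLang.BoundedFormula Empty n :=
  (tAdd s t).bdEqual t
def fSing {n : ℕ} (i : Fin n) : algLang.BoundedFormula Empty n :=
  (∼ (fLe (tV i) (tCompl (tV i)))) ⊓
   ∀' ((fLe (tV i.castSucc) (tV (Fin.last n))) ⊔ (fLe (tV i.castSucc) (tCompl (tV (Fin.last n)))))

def fHyp : algLang.BoundedFormula Empty 5 :=
  fLe (tV 0) tOne ⊓ (fLe (tV 2) tOne ⊓ (∼ ((tV 0).bdEqual (tV 2)) ⊓ (∼ ((tV 3).bdEqual (tV 4)) ⊓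
  (fSing 0 ⊓ (fSing 2 ⊓ (fSing 3 ⊓ (fSing 4 ⊓
  ((tComp (tV 0) (tV 3)).bdEqual (tV 3) ⊓ ((tComp (tV 0) (tV 4)).bdEqual (tV 4) ⊓
  ((tComp (tV 3) (tV 2)).bdEqual (tV 3) ⊓ ((tComp (tV 4) (tV 2)).bdEqual (tV 4))))))))))))

def theSentence : algLang.Sentence :=
  ∀' ∃' ∀' ∀' ∀' (fHyp ⟹ ((fLe (tV 3) (tV 1)) ⇔ ∼ (fLe (tV 4) (tV 1))))

section
variable {M : Type} [atomLang.Structure M] {n : ℕ} (v : Empty → TermAlg M) (xs : Fin n → TermAlg M)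

theorem val_tComp (s t : algLang.Term (Empty ⊕ Fin n)) :
    ((tComp s t).realize (Sum.elim v xs)).1 =
      sComp (s.realize (Sum.elim v xs)).1 (t.realize (Sum.elim v xs)).1 := rfl
theorem val_tAdd (s t : algLang.Term (Empty ⊕ Fin n)) :
    ((tAdd s t).realize (Sum.elim v xs)).1 =
      (s.realize (Sum.elim v xs)).1 ∪ (t.realize (Sum.elim v xs)).1 := rfl
theorem val_tCompl (s : algLang.Term (Empty ⊕ Fin n)) :
    ((tCompl s).realize (Sum.elim v xs)).1 =
      ((s.realize (Sum.elim v xs)).1)ᶜ := rfl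
theorem val_tOne :
    ((tOne : algLang.Term (Empty ⊕ Fin n)).realize (Sum.elim v xs)).1 = idSet M := rfl
theorem val_tV (i : Fin n) : (tV i).realize (Sum.elim v xs) = xs i := rfl

theorem realize_eqq (s t : algLang.Term (Empty ⊕ Fin n)) :
    (s.bdEqual t).Realize v xs ↔
      (s.realize (Sum.elim v xs)).1 = (t.realize (Sum.elim v xs)).1 := by
  rw [BoundedFormula.realize_bdEqual]
  exact Subtype.ext_iff

theorem realize_fLe (s t : algLang.Term (Empty ⊕ Fin n)) :
    (fLe s t).Realize v xs ↔
      (s.realize (Sum.elim v xs)).1 ⊆ (t.realize (Sum.elim v xs)).1 := by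
  rw [fLe, realize_eqq, val_tAdd, Set.union_eq_right]

theorem realize_fSing (i : Fin n) :
    (fSing i).Realize v xs ↔ ∃ a, (xs i).1 = {a} := by
  simp only [fSing, BoundedFormula.realize_inf, BoundedFormula.realize_not,
    BoundedFormula.realize_all, BoundedFormula.realize_sup, realize_fLe, val_tCompl, val_tV,
    Fin.snoc_castSucc, Fin.snoc_last]
  constructor
  · rintro ⟨h1, h2⟩
    have : (xs i).1.Nonempty := by
      by_contra h
      rw [Set.not_nonempty_iff_eq_empty] at h
      exact h1 (by rw [h]; exact Set.empty_subset _)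
    obtain ⟨a, ha⟩ := this
    refine ⟨a, ?_⟩
    rcases h2 ⟨{a}, InTA.sing a⟩ with h | h
    · exact Set.Subset.antisymm h (by simpa using ha)
    · exact absurd rfl (h ha)
  · rintro ⟨a, ha⟩
    rw [ha]
    refine ⟨fun h => h (Set.mem_singleton a) rfl, fun X => ?_⟩
    simp only [Set.singleton_subset_iff]
    exact em _
end

def Phi (M : Type) [atomLang.Structure M] : Prop :=
  ∀ x : M, mI x → ∃ X : Set M, InTA M X ∧ ∀ y a b : M, mI y → x ≠ y → a ≠ b →
    sComp {x} {a} = {a} → sComp {x} {b} = {b} → sComp {a} {y} = {a} → sComp {b} {y} = {b} →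
    (a ∈ X ↔ b ∉ X)

theorem realize_theSentence (M : Type) [atomLang.Structure M] :
    TermAlg M ⊨ theSentence ↔ Phi M := by
  unfold Sentence.Realize Formula.Realize
  simp only [theSentence, fHyp, BoundedFormula.realize_all, BoundedFormula.realize_ex,
    BoundedFormula.realize_imp, BoundedFormula.realize_iff, BoundedFormula.realize_inf,
    BoundedFormula.realize_not, realize_fLe, realize_fSing, realize_eqq, val_tComp, val_tOne,
    val_tV]
  have e : ∀ x X y a b : TermAlg M,
      let f : Fin 5 → TermAlg M :=
        Fin.snoc (Fin.snoc (Fin.snoc (Fin.snoc (Fin.snoc default x) X) y) a) b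
      f 0 = x ∧ f 1 = X ∧ f 2 = y ∧ f 3 = a ∧ f 4 = b :=
    fun x X y a b => ⟨rfl, rfl, rfl, rfl, rfl⟩
  dsimp only at e
  simp only [fun x X y a b => (e x X y a b).1, fun x X y a b => (e x X y a b).2.1,
    fun x X y a b => (e x X y a b).2.2.1, fun x X y a b => (e x X y a b).2.2.2.1,
    fun x X y a b => (e x X y a b).2.2.2.2]
  constructor
  · intro h x hx
    obtain ⟨X, hX⟩ := h ⟨{x}, InTA.sing x⟩
    refine ⟨X.1, X.2, fun y a b hy hxy hab h1 h2 h3 h4 => ?_⟩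
    have := hX ⟨{y}, InTA.sing y⟩ ⟨{a}, InTA.sing a⟩ ⟨{b}, InTA.sing b⟩
      ⟨Set.singleton_subset_iff.2 hx, Set.singleton_subset_iff.2 hy, by simpa using hxy, by simpa using hab, ⟨x, rfl⟩,
        ⟨y, rfl⟩, ⟨a, rfl⟩, ⟨b, rfl⟩, h1, h2, h3, h4⟩
    simpa using this
  · intro h x
    by_cases hs : ∃ a, x.1 = {a} ∧ mI a
    · obtain ⟨a, ha, hI⟩ := hs
      obtain ⟨X, hX, H⟩ := h a hI
      refine ⟨⟨X, hX⟩, ?_⟩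
      rintro y b c ⟨-, hy, hxy, hbc, -, ⟨y', hy'⟩, ⟨b', hb'⟩, ⟨c', hc'⟩, h1, h2, h3, h4⟩
      rw [ha, hy'] at hxy
      rw [hb', hc'] at hbc
      rw [hy'] at hy
      rw [ha, hb'] at h1
      rw [ha, hc'] at h2
      rw [hb', hy'] at h3
      rw [hc', hy'] at h4
      rw [hb', hc']
      have := H y' b' c' (hy rfl) (by rintro rfl; exact hxy rfl) (by rintro rfl; exact hbc rfl)
        h1 h2 h3 h4
      simpa using this
    · refine ⟨x, ?_⟩
      rintro y b c ⟨hx, -, -, -, ⟨x', hx'⟩, -⟩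
      exact absurd ⟨x', hx', hx (by rw [hx']; rfl)⟩ hs

theorem InTA_finite {M : Type} [atomLang.Structure M] [Nonempty M] {X : Set M} (h : X.Finite) :
    InTA M X := by
  induction X, h using Set.Finite.induction_on with
  | empty =>
    have a : M := Classical.arbitrary M
    have := InTA.compl (InTA.union (InTA.sing a) (InTA.compl (InTA.sing a)))
    simpa using this
  | insert _ _ ih => exact InTA.union (InTA.sing _) ih

def Atom.isR : Atom → Prop
  | .r _ _ _ _ => True
  | .rc _ _ _ _ => True
  | _ => False

theorem mP_Z (a b c : Atom) : mP a b c ↔ Prel a b c := Iff.rfl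
theorem mC_Z (a b : Atom) : mC a b ↔ Crel a b := Iff.rfl
theorem mI_Z (a : Atom) : mI a ↔ a.isId := Iff.rfl

theorem dom_of_P {x a : Atom} (hx : x.isId) (h : Prel x a a) : a.dom = x := by
  cases x <;> simp only [Atom.isId] at hx
  cases a <;> simp_all [Prel, Crel, Atom.dom, Atom.rg, Atom.cnv, Atom.isId] <;> omega

theorem rg_of_P {x a : Atom} (hx : x.isId) (h : Prel a x a) : a.rg = x := by
  cases x <;> simp only [Atom.isId] at hx
  cases a <;> simp_all [Prel, Crel, Atom.dom, Atom.rg, Atom.cnv, Atom.isId] <;> omega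

theorem split_Z {x y a b : Atom} (hxy : x ≠ y) (hab : a ≠ b) (h1 : a.dom = x)
    (h2 : b.dom = x) (h3 : a.rg = y) (h4 : b.rg = y) : a.isR ↔ ¬ b.isR := by
  subst h1 h3
  cases a <;> cases b <;> simp_all [Atom.dom, Atom.rg, Atom.isR]

theorem finite_R (x : Atom) : {c : Atom | c.isR ∧ c.dom = x}.Finite := by
  cases x with
  | id n i h =>
    let f : Bool × Fin (n+1) → Atom := fun p =>
      if h : 1 ≤ p.2.1 then
        (if p.1 then .r n p.2.1 h (by omega) else .rc n p.2.1 h (by omega))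
      else .id 0 0 le_rfl
    refine (Set.finite_range f).subset ?_
    rintro c ⟨hc, hd⟩
    cases c with
    | id => exact hc.elim
    | w => exact hc.elim
    | r m k h1 h2 =>
      simp only [Atom.dom, Atom.id.injEq] at hd
      obtain ⟨rfl, -⟩ := hd
      exact ⟨(true, ⟨k, by omega⟩), by simp [f, h1]⟩
    | rc m k h1 h2 =>
      simp only [Atom.dom, Atom.id.injEq] at hd
      obtain ⟨rfl, -⟩ := hd
      exact ⟨(false, ⟨k, by omega⟩), by simp [f, h1]⟩
  | _ => 
    convert Set.finite_empty
    ext c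
    cases c <;> simp [Atom.dom]

theorem P_of_comp {M : Type} [atomLang.Structure M] {a b c : M} (h : sComp {a} {b} = {c}) :
    mP a b c := by
  have : c ∈ sComp {a} {b} := by rw [h]; rfl
  obtain ⟨_, rfl, _, rfl, h'⟩ := this
  exact h'

theorem Phi_Z : Phi Atom := by
  intro x hx
  have : Nonempty Atom := ⟨x⟩
  refine ⟨_, InTA_finite (finite_R x), ?_⟩
  intro y a b hy hxy hab h1 h2 h3 h4
  have d1 := dom_of_P hx (P_of_comp h1)
  have d2 := dom_of_P hx (P_of_comp h2)
  have d3 := rg_of_P hy (P_of_comp h3)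
  have d4 := rg_of_P hy (P_of_comp h4)
  have := split_Z hxy hab d1 d2 d3 d4
  exact (and_iff_left d1).trans (this.trans (not_congr (and_iff_left d2).symm))

theorem par_Z {a b u v : Atom} (ha : ¬ a.isId) (hb : ¬ b.isId) (hd : a.dom = b.dom)
    (hr : a.rg = b.rg) (h : Prel u v a) :
    Prel u v b ∨ (v = a ∧ Prel u b b) ∨ (u = a ∧ Prel b v b) := by
  rcases h with ⟨h1, h2⟩ | ⟨h1, h2⟩ | ⟨h1, h2⟩ | h
  · subst h2
    exact Or.inr (Or.inl ⟨rfl, Or.inl ⟨h1.trans hd, rfl⟩⟩)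
  · subst h2
    exact Or.inr (Or.inr ⟨rfl, Or.inr (Or.inl ⟨h1.trans hr, rfl⟩)⟩)
  · exfalso
    apply ha
    rw [h2]
    cases u <;> trivial
  · left
    right; right; right
    rw [← hd, ← hr]
    exact ⟨h.1, h.2.1, hb, h.2.2.2⟩

section Up
variable (D : Ultrafilter ℕ)

def mk (f : ℕ → Atom) : UPow ℕ D := Quotient.mk _ f

variable {D}

theorem mk_surj (z : UPow ℕ D) : ∃ f, z = mk D f := by
  induction z using Quotient.inductionOn with
  | h f => exact ⟨f, rfl⟩

theorem mk_eq {f g : ℕ → Atom} : mk D f = mk D g ↔ ∀ᶠ n in (D : Filter ℕ), f n = g n :=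
  Quotient.eq

theorem mP_mk {f g h : ℕ → Atom} :
    mP (mk D f) (mk D g) (mk D h) ↔ ∀ᶠ n in (D : Filter ℕ), Prel (f n) (g n) (h n) := by
  have := relMap_quotient_mk' (L := atomLang)
    (s := (D : Filter ℕ).productSetoid (fun _ : ℕ => Atom))
    (ps := Ultraproduct.setoidPrestructure (fun _ : ℕ => Atom) D)
    (AtomRel.P : atomLang.Relations 3) ![f, g, h]
  refine Iff.trans ?_ this
  unfold mP
  refine Eq.to_iff (congrArg _ ?_)
  funext i
  fin_cases i <;> rfl

theorem mC_mk {f g : ℕ → Atom} :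
    mC (mk D f) (mk D g) ↔ ∀ᶠ n in (D : Filter ℕ), Crel (f n) (g n) := by
  have := relMap_quotient_mk' (L := atomLang)
    (s := (D : Filter ℕ).productSetoid (fun _ : ℕ => Atom))
    (ps := Ultraproduct.setoidPrestructure (fun _ : ℕ => Atom) D)
    (AtomRel.C : atomLang.Relations 2) ![f, g]
  refine Iff.trans ?_ this
  unfold mC
  refine Eq.to_iff (congrArg _ ?_)
  funext i
  fin_cases i <;> rfl

theorem mI_mk {f : ℕ → Atom} :
    mI (mk D f) ↔ ∀ᶠ n in (D : Filter ℕ), (f n).isId := by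
  have := relMap_quotient_mk' (L := atomLang)
    (s := (D : Filter ℕ).productSetoid (fun _ : ℕ => Atom))
    (ps := Ultraproduct.setoidPrestructure (fun _ : ℕ => Atom) D)
    (AtomRel.I : atomLang.Relations 1) ![f]
  refine Iff.trans ?_ this
  unfold mI
  refine Eq.to_iff (congrArg _ ?_)
  funext i
  fin_cases i
  rfl

/-- parallel non-identity elements -/
def Par (a b : UPow ℕ D) : Prop := ∃ f g, a = mk D f ∧ b = mk D g ∧
  ∀ᶠ n in (D : Filter ℕ), ¬ (f n).isId ∧ ¬ (g n).isId ∧ (f n).dom = (g n).dom ∧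
    (f n).rg = (g n).rg

theorem Par.symm {a b : UPow ℕ D} (h : Par a b) : Par b a := by
  obtain ⟨f, g, h1, h2, h⟩ := h
  exact ⟨g, f, h2, h1, h.mono fun n ⟨p, q, r, s⟩ => ⟨q, p, r.symm, s.symm⟩⟩

theorem Par.not_mI {a b : UPow ℕ D} (h : Par a b) : ¬ mI a := by
  obtain ⟨f, g, rfl, h2, h⟩ := h
  rw [mI_mk]
  intro h'
  obtain ⟨n, h1, h2⟩ := (h.and h').exists
  exact h1.1 h2

theorem Par.comp {a b u v : UPow ℕ D} (h : Par a b) (hP : mP u v a) :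
    mP u v b ∨ (v = a ∧ mP u b b) ∨ (u = a ∧ mP b v b) := by
  obtain ⟨f, g, rfl, rfl, h⟩ := h
  obtain ⟨u, rfl⟩ := mk_surj u
  obtain ⟨v, rfl⟩ := mk_surj v
  simp only [mP_mk, mk_eq, ← Filter.eventually_and, ← Ultrafilter.eventually_or] at hP ⊢
  filter_upwards [h, hP] with n hn hp
  exact par_Z hn.1 hn.2.1 hn.2.2.1 hn.2.2.2 hp

theorem Crel_iff {u a : Atom} : Crel u a ↔ u = a.cnv := by
  unfold Crel
  constructor
  · rintro rfl
    cases u <;> rfl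
  · rintro rfl
    cases a <;> rfl

theorem mem_conv {X : Set (UPow ℕ D)} {f : ℕ → Atom} :
    mk D f ∈ sConv X ↔ mk D (fun n => (f n).cnv) ∈ X := by
  constructor
  · rintro ⟨u, hu, h⟩
    obtain ⟨u, rfl⟩ := mk_surj u
    rw [mC_mk] at h
    convert hu using 1
    rw [mk_eq]
    filter_upwards [h] with n hn
    exact (Crel_iff.1 hn).symm
  · intro h
    refine ⟨_, h, ?_⟩
    rw [mC_mk]
    exact Filter.Eventually.of_forall fun n => Crel_iff.2 rfl

theorem comp_step {a b : ℕ → UPow ℕ D} (hp : ∀ k, Par (a k) (b k)) {X Y : Set (UPow ℕ D)}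
    {k : ℕ} (hX : a k ∈ X → b k ∈ X) (hY : a k ∈ Y → b k ∈ Y) (h : a k ∈ sComp X Y) :
    b k ∈ sComp X Y := by
  obtain ⟨u, hu, v, hv, h0⟩ := h
  rcases (hp k).comp h0 with h | ⟨rfl, h⟩ | ⟨rfl, h⟩
  · exact ⟨u, hu, v, hv, h⟩
  · exact ⟨u, hu, _, hY hv, h⟩
  · exact ⟨_, hX hu, v, hv, h⟩

theorem main_fin {a b a' b' : ℕ → UPow ℕ D} (hp : ∀ k, Par (a k) (b k))
    (hp' : ∀ k, Par (a' k) (b' k)) (ia : a.Injective) (ib : b.Injective)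
    (ia' : a'.Injective) (ib' : b'.Injective)
    (ca : ∀ X k, a k ∈ sConv X ↔ a' k ∈ X) (cb : ∀ X k, b k ∈ sConv X ↔ b' k ∈ X)
    (ca' : ∀ X k, a' k ∈ sConv X ↔ a k ∈ X) (cb' : ∀ X k, b' k ∈ sConv X ↔ b k ∈ X)
    {X : Set (UPow ℕ D)} (hX : InTA _ X) :
    ∀ᶠ k in Filter.cofinite, (a k ∈ X ↔ b k ∈ X) ∧ (a' k ∈ X ↔ b' k ∈ X) := by
  have ne : ∀ {f : ℕ → UPow ℕ D}, f.Injective → ∀ c, ∀ᶠ k in Filter.cofinite, f k ≠ c :=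
    fun hf c => hf.tendsto_cofinite.eventually (Set.finite_singleton c).eventually_cofinite_notMem
  induction hX with
  | sing c =>
    filter_upwards [ne ia c, ne ib c, ne ia' c, ne ib' c] with k h1 h2 h3 h4
    simp [h1, h2, h3, h4]
  | idset =>
    refine Filter.Eventually.of_forall fun k => ?_
    exact ⟨iff_of_false (hp k).not_mI (hp k).symm.not_mI,
      iff_of_false (hp' k).not_mI (hp' k).symm.not_mI⟩
  | union _ _ h1 h2 =>
    filter_upwards [h1, h2] with k h1 h2
    simp only [Set.mem_union]
    tauto
  | compl _ h =>
    filter_upwards [h] with k h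
    simp only [Set.mem_compl_iff]
    tauto
  | conv _ h =>
    filter_upwards [h] with k h
    rw [ca, cb, ca', cb']
    tauto
  | comp _ _ h1 h2 =>
    filter_upwards [h1, h2] with k h1 h2
    exact ⟨⟨comp_step hp h1.1.1 h2.1.1, comp_step (fun k => (hp k).symm) h1.1.2 h2.1.2⟩,
      ⟨comp_step hp' h1.2.1 h2.2.1, comp_step (fun k => (hp' k).symm) h1.2.2 h2.2.2⟩⟩

end Up

def fa (k n : ℕ) : Atom := if h : k + 1 ≤ n then .r n (k+1) (by omega) h else .id 0 0 le_rfl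
def fb (k n : ℕ) : Atom :=
  if h : k + 1 ≤ n then .w n 0 n (k+1) (by omega) h else .id 0 0 le_rfl
def fy (k n : ℕ) : Atom := if h : k + 1 ≤ n then .id n (k+1) h else .id 0 0 le_rfl

theorem comp_single {D : Ultrafilter ℕ} {f g h : ℕ → Atom}
    (H : ∀ᶠ n in (D : Filter ℕ), ∀ c, Prel (f n) (g n) c ↔ c = h n) :
    sComp {mk D f} {mk D g} = {mk D h} := by
  ext c
  obtain ⟨c, rfl⟩ := mk_surj c
  have : mk D c ∈ sComp {mk D f} {mk D g} ↔ mP (mk D f) (mk D g) (mk D c) := by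
    simp [sComp]
  rw [this, mP_mk, Set.mem_singleton_iff, mk_eq]
  exact Filter.eventually_congr (H.mono fun n hn => hn _)

theorem not_Phi (D : Ultrafilter ℕ) (hD : ∀ n : ℕ, D ≠ pure n) : ¬ Phi (UPow ℕ D) := by
  have big : ∀ k : ℕ, ∀ᶠ n in (D : Filter ℕ), k + 1 ≤ n := by
    intro k
    have : (D : Filter ℕ) ≤ Filter.cofinite := by
      rcases D.le_cofinite_or_eq_pure with h | ⟨n, h⟩
      · exact h
      · exact absurd h (hD n)
    rw [Nat.cofinite_eq_atTop] at this
    exact this (Filter.eventually_ge_atTop (k+1))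
  intro H
  obtain ⟨X, hX, H⟩ := H (mk D fun n => .id n 0 (Nat.zero_le n))
    (mI_mk.2 (Filter.Eventually.of_forall fun _ => trivial))
  have inj : ∀ f : ℕ → ℕ → Atom,
      (∀ k l n, k + 1 ≤ n → l + 1 ≤ n → f k n = f l n → k = l) →
      Function.Injective fun k => mk D (f k) := by
    intro f hf k l hkl
    obtain ⟨n, ⟨h1, h2⟩, h3⟩ := (((big k).and (big l)).and (mk_eq.1 hkl)).exists
    exact hf k l n h1 h2 h3
  have cc : ∀ a : Atom, a.cnv.cnv = a := by intro a; cases a <;> rfl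
  have fin := main_fin (D := D) (a := fun k => mk D (fa k)) (b := fun k => mk D (fb k))
    (a' := fun k => mk D (fun n => (fa k n).cnv)) (b' := fun k => mk D (fun n => (fb k n).cnv))
    (fun k => ⟨_, _, rfl, rfl, (big k).mono fun n hn => by
      simp [fa, fb, hn, Atom.isId, Atom.dom, Atom.rg]⟩)
    (fun k => ⟨_, _, rfl, rfl, (big k).mono fun n hn => by
      simp [fa, fb, hn, Atom.isId, Atom.dom, Atom.rg, Atom.cnv]⟩)
    (inj _ fun k l n h1 h2 h => by simpa [fa, h1, h2] using h)
    (inj _ fun k l n h1 h2 h => by simpa [fb, h1, h2] using h)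
    (inj _ fun k l n h1 h2 h => by simpa [fa, h1, h2, Atom.cnv] using h)
    (inj _ fun k l n h1 h2 h => by simpa [fb, h1, h2, Atom.cnv] using h)
    (fun X k => mem_conv) (fun X k => mem_conv)
    (fun X k => by simp only [mem_conv, cc]) (fun X k => by simp only [mem_conv, cc]) hX
  obtain ⟨k, hk, -⟩ := fin.exists
  have := H (mk D (fy k)) (mk D (fa k)) (mk D (fb k))
    (mI_mk.2 ((big k).mono fun n hn => by simp [fy, hn, Atom.isId]))
    (fun h => by
      obtain ⟨n, h1, h2⟩ := ((mk_eq.1 h).and (big k)).exists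
      simp [fy, h2] at h1)
    (fun h => by
      obtain ⟨n, h1, h2⟩ := ((mk_eq.1 h).and (big k)).exists
      simp [fa, fb, h2] at h1)
    (comp_single ((big k).mono fun n hn c => by
      simp [fa, hn, Prel, Crel, Atom.cnv, Atom.isId, Atom.dom, Atom.rg]))
    (comp_single ((big k).mono fun n hn c => by
      simp [fb, hn, Prel, Crel, Atom.cnv, Atom.isId, Atom.dom, Atom.rg]))
    (comp_single ((big k).mono fun n hn c => by
      simp [fa, fy, hn, Prel, Crel, Atom.cnv, Atom.isId, Atom.dom, Atom.rg]))
    (comp_single ((big k).mono fun n hn c => by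
      simp [fb, fy, hn, Prel, Crel, Atom.cnv, Atom.isId, Atom.dom, Atom.rg]))
  tauto

/-- For a nonprincipal ultrafilter `D` on `ℕ`, the term algebra of `Z` and the
term algebra of the ultrapower `Z'` of `Z` by `D`, regarded as structures in
the language `algLang`, are not elementarily equivalent. -/
theorem stmt_14 (D : Ultrafilter ℕ) (hD : ∀ n : ℕ, D ≠ pure n) :
    ¬ (TermAlg Atom ≅[algLang] TermAlg (UPow ℕ D)) := by
  intro h
  have := elementarilyEquivalent_iff.1 h theSentence
  rw [realize_theSentence, realize_theSentence] at this
  exact not_Phi D hD (this.1 Phi_Z)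
end

section
/- Let D be an ultrafilter on a set J and let Z' = ⟨S', P', C', I'⟩ be the ultrapower of Z with respect to D. For all X, Y ⊆ S' ∖ I' and all distinct x, y ∈ I': if X;Y contains some element going from x to y, then X;Y contains every element of S' going from x to y. In particular, the composition of two sets of diversity atoms of Z' splits no pair of distinct elements of I'. -/
open FirstOrder FirstOrder.Language

theorem goes_dom {u x y : Atom} (hx : x.isId) (hy : y.isId)
    (h1 : Prel x u u) (h2 : Prel u y u) : u.dom = x ∧ u.rg = y := by
  cases x <;> cases y <;> simp only [Atom.isId] at hx hy <;>
    cases u <;> simp_all [Prel, Crel, Atom.dom, Atom.rg, Atom.cnv, Atom.isId] <;> omega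

theorem pointwise {a b u v x y : Atom} (ha : ¬ a.isId) (hb : ¬ b.isId)
    (hx : x.isId) (hy : y.isId) (hxy : x ≠ y) (hp : Prel a b u)
    (h1 : Prel x u u) (h2 : Prel u y u) (h3 : Prel x v v) (h4 : Prel v y v) : Prel a b v := by
  obtain ⟨hu1, hu2⟩ := goes_dom hx hy h1 h2
  obtain ⟨hv1, hv2⟩ := goes_dom hx hy h3 h4
  have key : ∀ c : Atom, c.isId → c.dom = c.rg := by
    intro c hc
    cases c <;> simp_all [Atom.isId, Atom.dom, Atom.rg]
  have hd : ∀ c : Atom, c.dom.isId := by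
    intro c
    cases c <;> simp [Atom.isId, Atom.dom]
  have hr : ∀ c : Atom, c.rg.isId := by
    intro c
    cases c <;> simp [Atom.isId, Atom.rg]
  rcases hp with ⟨h, _⟩ | ⟨h, _⟩ | ⟨_, h⟩ | ⟨_, _, _, e1, e2, e3⟩
  · exact absurd (h ▸ hd b) ha
  · exact absurd (h ▸ hr a) hb
  · exact absurd (hu1.symm.trans ((key u (h ▸ hd a)).trans hu2)) hxy
  · refine Or.inr (Or.inr (Or.inr ⟨ha, hb, ?_, ?_, e2, ?_⟩))
    · intro hv
      exact hxy (hv1.symm.trans ((key v hv).trans hv2))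
    · rw [e1, hu1, hv1]
    · rw [e3, hu2, hv2]

/-- The class of a function in the ultrapower. -/
def mkU (J : Type) (D : Ultrafilter J) (f : J → Atom) : UPow J D :=
  Quotient.mk ((D : Filter J).productSetoid (fun _ : J => Atom)) f

theorem mkU_surj {J : Type} {D : Ultrafilter J} (a : UPow J D) : ∃ f, mkU J D f = a :=
  Quotient.exists_rep a

theorem relMap_mkU {J : Type} {D : Ultrafilter J} {n : ℕ} (r : atomLang.Relations n)
    (x : Fin n → J → Atom) :
    Structure.RelMap r (fun i => mkU J D (x i)) ↔
      ∀ᶠ j in (D : Filter J), Structure.RelMap r (fun i => x i j) :=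
  (@relMap_quotient_mk' atomLang (J → Atom)
    ((D : Filter J).productSetoid (fun _ : J => Atom))
    (Ultraproduct.setoidPrestructure (fun _ : J => Atom) D) n r x)

theorem mI_mkU {J : Type} {D : Ultrafilter J} (f : J → Atom) :
    mI (mkU J D f) ↔ ∀ᶠ j in (D : Filter J), (f j).isId := by
  have h := relMap_mkU (D := D)
    (AtomRel.I : atomLang.Relations 1) ![f]
  have e : (fun i => mkU J D (![f] i))
      = ![mkU J D f] := by
    funext i; fin_cases i; rfl
  rw [e] at h
  exact h

theorem mP_mkU {J : Type} {D : Ultrafilter J} (f g k : J → Atom) :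
    mP (mkU J D f) (mkU J D g) (mkU J D k) ↔
      ∀ᶠ j in (D : Filter J), Prel (f j) (g j) (k j) := by
  have h := relMap_mkU (D := D)
    (AtomRel.P : atomLang.Relations 3) ![f, g, k]
  have e : (fun i => mkU J D (![f, g, k] i))
      = ![mkU J D f, mkU J D g, mkU J D k] := by
    funext i; fin_cases i <;> rfl
  rw [e] at h
  exact h

theorem mkU_ne {J : Type} {D : Ultrafilter J} (f g : J → Atom) (h : mkU J D f ≠ mkU J D g) :
    ∀ᶠ j in (D : Filter J), f j ≠ g j := by
  refine Ultrafilter.eventually_not.2 fun hh => h ?_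
  exact Quotient.sound hh

/-- In any ultrapower `Z'` of `Z`: for all `X, Y ⊆ S' ∖ I'` and all distinct
`x, y ∈ I'`, if `X;Y` contains some element going from `x` to `y`, then `X;Y`
contains every element of `S'` going from `x` to `y`.  In particular, the
composition of two sets of diversity atoms of `Z'` splits no pair of distinct
elements of `I'`. -/
theorem stmt_15 (J : Type) (D : Ultrafilter J) (X Y : Set (UPow J D))
    (hX : ∀ a ∈ X, ¬ mI a) (hY : ∀ a ∈ Y, ¬ mI a)
    (x y : UPow J D) (hx : mI x) (hy : mI y) (hxy : x ≠ y) :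
    ((∃ u ∈ sComp X Y, goes u x y) →
      ∀ v : UPow J D, goes v x y → v ∈ sComp X Y) ∧
    ¬ SplitsG (sComp X Y) x y := by
  have main : (∃ u ∈ sComp X Y, goes u x y) →
      ∀ v : UPow J D, goes v x y → v ∈ sComp X Y := by
    rintro ⟨u, ⟨a, ha, b, hb, hp⟩, h1, h2⟩ v ⟨h3, h4⟩
    refine ⟨a, ha, b, hb, ?_⟩
    have ha' := hX a ha
    have hb' := hY b hb
    clear ha hb
    obtain ⟨a, rfl⟩ := mkU_surj a
    obtain ⟨b, rfl⟩ := mkU_surj b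
    obtain ⟨u, rfl⟩ := mkU_surj u
    obtain ⟨v, rfl⟩ := mkU_surj v
    obtain ⟨x, rfl⟩ := mkU_surj x
    obtain ⟨y, rfl⟩ := mkU_surj y
    rw [mI_mkU] at ha' hb' hx hy
    rw [mP_mkU] at *
    have hne := mkU_ne _ _ hxy
    filter_upwards [Ultrafilter.eventually_not.2 ha', Ultrafilter.eventually_not.2 hb',
      hx, hy, hne, hp, h1, h2, h3, h4] with j q1 q2 q3 q4 q5 q6 q7 q8 q9 q10
    exact pointwise q1 q2 q3 q4 q5 q6 q7 q8 q9 q10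
  refine ⟨main, ?_⟩
  rintro ⟨a, ha, b, hb, h1, h2⟩
  exact hb (main ⟨a, ha, h1⟩ b h2)
end

section
/- The term algebra of the atom structure H consists exactly of the finite and the cofinite subsets of H. -/
/-- The atoms of the atom structure `H`: the elements of `ω` together with
three further pairwise distinct elements `1'`, `x` and `x⁻`. -/
inductive HAtom : Type
  | nat : ℕ → HAtom
  | one : HAtom
  | x : HAtom
  | xc : HAtom

/-- The converse function on `H`: every atom is self-converse except `x` and
`x⁻`, which are each other's converses. -/
def HAtom.cnv : HAtom → HAtom
  | .x => .xc
  | .xc => .x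
  | a => a

/-- The binary relation `C_H`: exactly the pairs `(a, cnv a)`, i.e. the pairs
`(a,a)` for `a ∈ H ∖ {x, x⁻}` together with `(x, x⁻)` and `(x⁻, x)`. -/
def CH (a b : HAtom) : Prop := b = HAtom.cnv a

/-- The set `F` of forbidden triples. -/
def FH : Set (HAtom × HAtom × HAtom) :=
  {t | ∃ n : ℕ,
    t = (.nat n, .x, .nat (n + 1)) ∨ t = (.nat (n + 1), .xc, .nat n) ∨
    t = (.nat (n + 1), .nat n, .xc) ∨ t = (.xc, .nat n, .nat (n + 1)) ∨
    t = (.nat n, .nat (n + 1), .x) ∨ t = (.x, .nat (n + 1), .nat n)}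

/-- The ternary relation `P_H`: the triples `(1',a,a)` and `(a,1',a)` for
`a ∈ H`, the triples `(a,b,1')` for `(a,b) ∈ C_H`, and the triples `(a,b,c)`
of elements of `H ∖ {1'}` not belonging to `F`. -/
def PH (a b c : HAtom) : Prop :=
  (a = .one ∧ c = b) ∨ (b = .one ∧ c = a) ∨ (CH a b ∧ c = .one) ∨
  (a ≠ .one ∧ b ≠ .one ∧ c ≠ .one ∧ (a, b, c) ∉ FH)

/-- `X ; Y = {u : ∃ a ∈ X, b ∈ Y, P_H(a,b,u)}`. -/
def hComp (X Y : Set HAtom) : Set HAtom := {u | ∃ a ∈ X, ∃ b ∈ Y, PH a b u}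

/-- `X⁻ = {u : ∃ a ∈ X, C_H(a,u)}`. -/
def hConv (X : Set HAtom) : Set HAtom := {u | ∃ a ∈ X, CH a u}

/-- Membership in the term algebra of `H`: the smallest collection of subsets
of `H` containing all singletons and the set `I_H = {1'}`, closed under binary
union, complementation in `H`, the operation `;` and the operation `⁻`. -/
inductive InTAH : Set HAtom → Prop
  | sing (a : HAtom) : InTAH {a}
  | idset : InTAH {HAtom.one}
  | union {X Y : Set HAtom} : InTAH X → InTAH Y → InTAH (X ∪ Y)
  | compl {X : Set HAtom} : InTAH X → InTAH Xᶜ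
  | comp {X Y : Set HAtom} : InTAH X → InTAH Y → InTAH (hComp X Y)
  | conv {X : Set HAtom} : InTAH X → InTAH (hConv X)

def HAtom.idx : HAtom → ℕ
  | .nat n => n
  | _ => 0

theorem FH_slice_finite (a b : HAtom) : {c | (a, b, c) ∈ FH}.Finite := by
  apply Set.Finite.subset (Set.toFinite ({.x, .xc, .nat (a.idx + 1), .nat (a.idx - 1),
    .nat (b.idx + 1), .nat (b.idx - 1)} : Set HAtom))
  rintro c ⟨n, h⟩
  simp only [Prod.mk.injEq] at h
  rcases h with h | h | h | h | h | h <;> obtain ⟨rfl, rfl, rfl⟩ := h <;> simp [HAtom.idx]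

theorem hComp_cofinite {X Y : Set HAtom} {a b : HAtom} (ha : a ∈ X) (hb : b ∈ Y)
    (ha1 : a ≠ .one) (hb1 : b ≠ .one) : (hComp X Y)ᶜ.Finite := by
  apply Set.Finite.subset ((FH_slice_finite a b).union (Set.finite_singleton HAtom.one))
  intro c hc
  by_contra h
  simp only [Set.mem_union, Set.mem_setOf_eq, Set.mem_singleton_iff, not_or] at h
  exact hc ⟨a, ha, b, hb, Or.inr (Or.inr (Or.inr ⟨ha1, hb1, h.2, h.1⟩))⟩

theorem PH_one_left (b c : HAtom) : PH .one b c ↔ c = b := by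
  cases b <;> simp [PH, CH, HAtom.cnv]

theorem PH_one_right (b c : HAtom) : PH b .one c ↔ c = b := by
  cases b <;> simp [PH, CH, HAtom.cnv]

theorem hComp_fc {X Y : Set HAtom} (hX : X.Finite ∨ Xᶜ.Finite) (hY : Y.Finite ∨ Yᶜ.Finite) :
    (hComp X Y).Finite ∨ (hComp X Y)ᶜ.Finite := by
  by_cases h1 : ∃ a ∈ X, a ≠ .one
  · by_cases h2 : ∃ b ∈ Y, b ≠ .one
    · obtain ⟨a, ha, ha1⟩ := h1
      obtain ⟨b, hb, hb1⟩ := h2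
      exact Or.inr (hComp_cofinite ha hb ha1 hb1)
    · push Not at h2
      by_cases h3 : HAtom.one ∈ Y
      · have : hComp X Y = X := by
          ext c
          constructor
          · rintro ⟨a, ha, b, hb, h⟩
            rw [h2 b hb, PH_one_right] at h
            exact h ▸ ha
          · intro h
            exact ⟨c, h, _, h3, (PH_one_right _ _).2 rfl⟩
        rwa [this]
      · left
        apply Set.Finite.subset Set.finite_empty
        rintro c ⟨a, ha, b, hb, h⟩
        exact h3 (h2 b hb ▸ hb)
  · push Not at h1
    by_cases h3 : HAtom.one ∈ X
    · have : hComp X Y = Y := by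
        ext c
        constructor
        · rintro ⟨a, ha, b, hb, h⟩
          rw [h1 a ha, PH_one_left] at h
          exact h ▸ hb
        · intro h
          exact ⟨_, h3, c, h, (PH_one_left _ _).2 rfl⟩
      rwa [this]
    · left
      apply Set.Finite.subset Set.finite_empty
      rintro c ⟨a, ha, b, hb, h⟩
      exact h3 (h1 a ha ▸ ha)

theorem cnv_invol : Function.Involutive HAtom.cnv := by
  intro a
  cases a <;> rfl

theorem hConv_eq (X : Set HAtom) : hConv X = HAtom.cnv '' X := by
  ext u
  simp [hConv, CH, eq_comm]

theorem InTAH_finite {X : Set HAtom} (h : X.Finite) : InTAH X := by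
  induction X, h using Set.Finite.induction_on with
  | empty =>
    have := InTAH.compl (InTAH.union InTAH.idset (InTAH.compl InTAH.idset))
    simpa using this
  | insert _ _ ih =>
    rw [Set.insert_eq]
    exact InTAH.union (InTAH.sing _) ih

/-- The term algebra of the atom structure `H` consists exactly of the finite
and the cofinite subsets of `H`. -/
theorem stmt_16 (X : Set HAtom) : InTAH X ↔ (X.Finite ∨ Xᶜ.Finite) := by
  constructor
  · intro h
    induction h with
    | sing a => exact Or.inl (Set.finite_singleton a)
    | idset => exact Or.inl (Set.finite_singleton _)
    | union _ _ h1 h2 =>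
      rw [Set.compl_union]
      rcases h1 with h1 | h1
      · rcases h2 with h2 | h2
        · exact Or.inl (h1.union h2)
        · exact Or.inr (h2.subset Set.inter_subset_right)
      · exact Or.inr (h1.subset Set.inter_subset_left)
    | compl _ h => rw [compl_compl]; exact h.symm
    | comp _ _ h1 h2 => exact hComp_fc h1 h2
    | conv _ h =>
      rw [hConv_eq, ← Set.image_compl_eq cnv_invol.bijective]
      exact h.imp (fun h => h.image _) (fun h => h.image _)
  · rintro (h | h)
    · exact InTAH_finite h
    · simpa using InTAH.compl (InTAH_finite h)
end

section
/- In Z, for all distinct x, y ∈ I: the pair (x,y) is splitable if and only if {x,y} = {id_{n,0}, id_{n,k}} for some n ∈ ℕ and 1 ≤ k ≤ n. Moreover, for 1 ≤ k ≤ n, the elements of S with domain id_{n,0} and range id_{n,k} are exactly r_{n,k} and w_{n,0,n,k}, and for distinct x, y ∈ I with {x,y} not of the form {id_{n,0}, id_{n,k}} (1 ≤ k ≤ n), there is exactly one element of S with domain x and range y. -/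
open FirstOrder FirstOrder.Language

/-- In `Z`, for all distinct `x, y ∈ I`: the pair `(x,y)` is splitable iff
`{x,y} = {id n 0, id n k}` for some `n` and `1 ≤ k ≤ n`.  Moreover, for
`1 ≤ k ≤ n`, the elements of `S` with domain `id n 0` and range `id n k` are
exactly `r n k` and `w n 0 n k`; and for distinct `x, y ∈ I` with `{x,y}` not
of this form, there is exactly one element of `S` with domain `x` and
range `y`. -/
theorem stmt_17 :
    (∀ x y : Atom, x.isId → y.isId → x ≠ y →
      (Splitable x y ↔ ∃ (n k : ℕ) (_ : 1 ≤ k) (h2 : k ≤ n),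
        ({x, y} : Set Atom) = {Atom.id n 0 (Nat.zero_le n), Atom.id n k h2})) ∧
    (∀ (n k : ℕ) (h1 : 1 ≤ k) (h2 : k ≤ n), ∀ a : Atom,
      (a.dom = Atom.id n 0 (Nat.zero_le n) ∧ a.rg = Atom.id n k h2) ↔
        (a = Atom.r n k h1 h2 ∨ a = Atom.w n 0 n k (Nat.zero_le n) h2)) ∧
    (∀ x y : Atom, x.isId → y.isId → x ≠ y →
      (¬ ∃ (n k : ℕ) (_ : 1 ≤ k) (h2 : k ≤ n),
        ({x, y} : Set Atom) = {Atom.id n 0 (Nat.zero_le n), Atom.id n k h2}) →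
      ∃! a : Atom, a.dom = x ∧ a.rg = y) := by
  have key : ∀ x y : Atom, x.isId → y.isId → x ≠ y →
      (¬ ∃ (n k : ℕ) (_ : 1 ≤ k) (h2 : k ≤ n),
        ({x, y} : Set Atom) = {Atom.id n 0 (Nat.zero_le n), Atom.id n k h2}) →
      ∃! a : Atom, a.dom = x ∧ a.rg = y := by
    intro x y hx hy hne hns
    cases x with
    | id n i hi =>
      cases y with
      | id m j hj =>
        refine ⟨Atom.w n i m j hi hj, ⟨rfl, rfl⟩, ?_⟩
        rintro a ⟨h1, h2⟩
        cases a with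
        | id p q h => exact absurd (h1.symm.trans h2) hne
        | r p q hq hp =>
          exact absurd ⟨p, q, hq, hp, by rw [← h1, ← h2]; rfl⟩ hns
        | rc p q hq hp =>
          exact absurd ⟨p, q, hq, hp, by rw [← h1, ← h2, Set.pair_comm]; rfl⟩ hns
        | w p q p' q' hp hq =>
          simp only [Atom.dom, Atom.rg, Atom.id.injEq] at h1 h2
          obtain ⟨rfl, rfl⟩ := h1
          obtain ⟨rfl, rfl⟩ := h2
          rfl
      | _ => exact hy.elim
    | _ => exact hx.elim
  refine ⟨?_, ?_, key⟩
  · intro x y hx hy hne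
    constructor
    · rintro ⟨-, a, b, hab, h1, h2, h3, h4⟩
      by_contra hns
      exact hab ((key x y hx hy hne hns).unique ⟨h1, h2⟩ ⟨h3, h4⟩)
    · rintro ⟨n, k, h1, h2, h⟩
      refine ⟨hne, ?_⟩
      rcases Set.pair_eq_pair_iff.1 h with ⟨rfl, rfl⟩ | ⟨rfl, rfl⟩
      · exact ⟨Atom.r n k h1 h2, Atom.w n 0 n k (Nat.zero_le n) h2, by simp, rfl, rfl, rfl, rfl⟩
      · exact ⟨Atom.rc n k h1 h2, Atom.w n k n 0 h2 (Nat.zero_le n), by simp, rfl, rfl, rfl, rfl⟩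
  · intro n k h1 h2 a
    constructor
    · rintro ⟨ha, hb⟩
      cases a <;> simp only [Atom.dom, Atom.rg, Atom.id.injEq] at ha hb
      · omega
      · obtain ⟨rfl, rfl⟩ := hb
        exact Or.inl rfl
      · omega
      · obtain ⟨rfl, rfl⟩ := ha
        obtain ⟨rfl, rfl⟩ := hb
        exact Or.inr rfl
    · rintro (rfl | rfl) <;> exact ⟨rfl, rfl⟩
end
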